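/- arXiv:2109.07803 — 2 statements merged into one kernel-verified Lean document; each statement's English description precedes it below -/
import Mathlib

section
/- For every n : ℕ, the number of binary relations W on Fin (n+1) such that (i) W x y implies x ≤ y, (ii) W x x holds for every x, and (iii) for all x ≤ y ≤ z, W x z holds if and only if both W x y and W y z hold, is exactly 2^n. (These relations are precisely the possible classes of weak equivalences of model structures on [n]: composition-closed, decomposable classes, which are in bijection with the interval partitions of [n].) -/
/-- A reflexive relation satisfying the composition-and-decomposition law holds between `x ≤ y`
iff it holds on every consecutive pair between `x` and `y`. -/
theorem rel_iff_forall_consecutive {n : ℕ} {W : Fin (n + 1) → Fin (n + 1) → Prop}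
    (hrefl : ∀ x, W x x)
    (hW : ∀ x y z, x ≤ y → y ≤ z → (W x z ↔ W x y ∧ W y z)) {x y : Fin (n + 1)} (hxy : x ≤ y) :
    W x y ↔ ∀ i : Fin n, x ≤ i.castSucc → i.succ ≤ y → W i.castSucc i.succ := by
  induction y using Fin.induction with
  | zero =>
    obtain rfl : x = 0 := le_antisymm hxy (Fin.zero_le x)
    refine iff_of_true (hrefl 0) fun i _ hi => ?_
    exact absurd hi (not_le.mpr i.succ_pos)
  | succ j ih =>
    rcases hxy.eq_or_lt with rfl | hlt
    · refine iff_of_true (hrefl _) fun i h₁ h₂ => ?_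
      exact absurd (h₁.trans_lt i.castSucc_lt_succ) (not_lt.mpr h₂)
    · have hxj : x ≤ j.castSucc := Fin.le_castSucc_iff.mpr hlt
      rw [hW x j.castSucc j.succ hxj j.castSucc_lt_succ.le, ih hxj]
      constructor
      · rintro ⟨h, hj⟩ i hxi hij
        rcases (Fin.succ_le_succ_iff.mp hij).eq_or_lt with rfl | hlt
        · exact hj
        · exact h i hxi (Fin.succ_le_castSucc_iff.mpr hlt)
      · exact fun h => ⟨fun i hxi hij => h i hxi (hij.trans j.castSucc_lt_succ.le),
          h j hxj le_rfl⟩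

/-- Relations refining `≤` on `Fin (n + 1)`, reflexive, composition-closed and decomposable,
correspond to the sets of consecutive pairs that they contain. -/
def weakEquivalencePatternsEquivSet (n : ℕ) :
    {W : Fin (n + 1) → Fin (n + 1) → Prop //
        (∀ x y, W x y → x ≤ y) ∧ (∀ x, W x x) ∧
        (∀ x y z, x ≤ y → y ≤ z → (W x z ↔ W x y ∧ W y z))} ≃ Set (Fin n) where
  toFun W := {i | W.1 i.castSucc i.succ}
  invFun S := ⟨fun x y => x ≤ y ∧ ∀ i : Fin n, x ≤ i.castSucc → i.succ ≤ y → i ∈ S,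
    fun _ _ h => h.1,
    fun _ => ⟨le_rfl, fun i h₁ h₂ =>
      absurd (h₁.trans_lt i.castSucc_lt_succ) (not_lt.mpr h₂)⟩,
    fun x y z hxy hyz => by
      constructor
      · rintro ⟨_, h⟩
        exact ⟨⟨hxy, fun i h₁ h₂ => h i h₁ (h₂.trans hyz)⟩,
          ⟨hyz, fun i h₁ h₂ => h i (hxy.trans h₁) h₂⟩⟩
      · rintro ⟨⟨_, h⟩, ⟨_, h'⟩⟩
        refine ⟨hxy.trans hyz, fun i h₁ h₂ => ?_⟩
        rcases le_or_gt y i.castSucc with hy | hy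
        · exact h' i hy h₂
        · exact h i h₁ (Fin.castSucc_lt_iff_succ_le.mp hy)⟩
  left_inv := by
    rintro ⟨W, hle, hrefl, hW⟩
    ext x y
    exact ⟨fun h => (rel_iff_forall_consecutive hrefl hW h.1).mpr h.2,
      fun h => ⟨hle x y h, (rel_iff_forall_consecutive hrefl hW (hle x y h)).mp h⟩⟩
  right_inv S := by
    ext j
    refine ⟨fun h => h.2 j le_rfl le_rfl, fun hj => ⟨j.castSucc_lt_succ.le, fun i h₁ h₂ => ?_⟩⟩
    obtain rfl : i = j := le_antisymm (Fin.succ_le_succ_iff.mp h₂)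
      (Fin.castSucc_le_castSucc_iff.mp h₁)
    exact hj

/-- The number of binary relations `W` on `Fin (n+1)` refining `≤`, reflexive,
and such that for `x ≤ y ≤ z`, `W x z` holds iff both `W x y` and `W y z` hold
(the possible classes of weak equivalences of model structures on `[n]`), is
exactly `2^n`. -/
theorem card_weak_equivalence_patterns (n : ℕ) :
    Nat.card {W : Fin (n + 1) → Fin (n + 1) → Prop //
        (∀ x y, W x y → x ≤ y) ∧ (∀ x, W x x) ∧
        (∀ x y z, x ≤ y → y ≤ z → (W x z ↔ W x y ∧ W y z))} =
      2 ^ n := by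
  rw [Nat.card_congr (weakEquivalencePatternsEquivSet n), Nat.card_eq_fintype_card,
    Fintype.card_set, Fintype.card_fin]
end

section
/- For every n : ℕ, the number of model structures on the category [n] in which every morphism is a fibration is exactly 2^n. -/
universe v u

open CategoryTheory

section ModelDefs

variable {C : Type u} [Category.{v} C]

/-- `f` is a retract of `g` in the arrow category of `C`. -/
def IsRetractOfHom {X Y X' Y' : C} (f : X ⟶ Y) (g : X' ⟶ Y') : Prop :=
  ∃ (a : X ⟶ X') (b : Y ⟶ Y') (a' : X' ⟶ X) (b' : Y' ⟶ Y),
    a ≫ a' = 𝟙 X ∧ b ≫ b' = 𝟙 Y ∧ f ≫ b = a ≫ g ∧ g ≫ b' = a' ≫ f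

/-- A class of morphisms is stable under retracts (in the arrow category). -/
def StableUnderRetractsHom (P : MorphismProperty C) : Prop :=
  ∀ ⦃X Y X' Y' : C⦄ (f : X ⟶ Y) (g : X' ⟶ Y'), IsRetractOfHom f g → P g → P f

/-- A (Quillen) model structure on a category `C`: three classes of morphisms —
weak equivalences, fibrations, cofibrations — each closed under composition and
retracts, the weak equivalences satisfying two-out-of-three, cofibrations
(resp. acyclic cofibrations) having the left lifting property against acyclic
fibrations (resp. fibrations), and every morphism factoring as a cofibration
followed by an acyclic fibration and as an acyclic cofibration followed by a
fibration. A model category is a category with all finite limits and colimits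
equipped with such a structure. -/
structure ModelStructure (C : Type u) [Category.{v} C] where
  weq : MorphismProperty C
  fib : MorphismProperty C
  cof : MorphismProperty C
  weq_comp : weq.IsStableUnderComposition
  fib_comp : fib.IsStableUnderComposition
  cof_comp : cof.IsStableUnderComposition
  weq_retract : StableUnderRetractsHom weq
  fib_retract : StableUnderRetractsHom fib
  cof_retract : StableUnderRetractsHom cof
  weq_two_out_of_three : weq.HasTwoOutOfThreeProperty
  lift_cof_trivFib : ∀ ⦃A B X Y : C⦄ (i : A ⟶ B) (p : X ⟶ Y),
    cof i → fib p → weq p → HasLiftingProperty i p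
  lift_trivCof_fib : ∀ ⦃A B X Y : C⦄ (i : A ⟶ B) (p : X ⟶ Y),
    cof i → weq i → fib p → HasLiftingProperty i p
  factor_cof_trivFib : ∀ ⦃X Y : C⦄ (f : X ⟶ Y),
    ∃ (Z : C) (i : X ⟶ Z) (p : Z ⟶ Y), cof i ∧ fib p ∧ weq p ∧ i ≫ p = f
  factor_trivCof_fib : ∀ ⦃X Y : C⦄ (f : X ⟶ Y),
    ∃ (Z : C) (i : X ⟶ Z) (p : Z ⟶ Y), cof i ∧ weq i ∧ fib p ∧ i ≫ p = f

end ModelDefs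

namespace ModelStructure

section Preorder

variable {P : Type u}

lemma hasLiftingProperty_of_le [Preorder P] {A B X Y : P} (i : A ⟶ B) (p : X ⟶ Y)
    (h : A ≤ X → B ≤ Y → B ≤ X) : HasLiftingProperty i p :=
  ⟨fun {f g} _ => ⟨⟨⟨homOfLE (h f.le g.le), Subsingleton.elim _ _, Subsingleton.elim _ _⟩⟩⟩⟩

lemma le_of_hasLiftingProperty [Preorder P] {A B X Y : P} (i : A ⟶ B) (p : X ⟶ Y)
    (h : HasLiftingProperty i p) (hAX : A ≤ X) (hBY : B ≤ Y) : B ≤ X :=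
  (CommSq.mk (Subsingleton.elim (homOfLE hAX ≫ p) (i ≫ homOfLE hBY))).lift.le

lemma stableUnderRetractsHom [PartialOrder P] (W : MorphismProperty P) :
    StableUnderRetractsHom W := by
  rintro X Y X' Y' f g ⟨a, b, a', b', -⟩ hg
  obtain rfl := le_antisymm a.le a'.le
  obtain rfl := le_antisymm b.le b'.le
  rwa [Subsingleton.elim f g]

variable [PartialOrder P] (M : ModelStructure P)

lemma weq_id (x : P) : M.weq (𝟙 x) := by
  obtain ⟨z, i, p, -, -, hp, -⟩ := M.factor_cof_trivFib (𝟙 x)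
  obtain rfl := le_antisymm i.le p.le
  rwa [Subsingleton.elim (𝟙 x) p]

/-- When every morphism is a fibration, the initial part of a weak equivalence
in a partial order is a weak equivalence. -/
lemma weq_left (hM : ∀ ⦃x y : P⦄ (f : x ⟶ y), M.fib f) {x y z : P}
    (f : x ⟶ z) (g : z ⟶ y) (h : M.weq (f ≫ g)) : M.weq f := by
  obtain ⟨c, i, p, hi, -, hp, -⟩ := M.factor_cof_trivFib f
  have hc : c ≤ x := le_of_hasLiftingProperty i (f ≫ g)
    (M.lift_cof_trivFib _ _ hi (hM _) h) le_rfl (p.le.trans g.le)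
  obtain rfl := le_antisymm i.le hc
  rwa [Subsingleton.elim f p]

end Preorder

variable {n : ℕ}

lemma exists_succ_of_lt {x y : Fin (n + 1)} (h : x < y) :
    ∃ i : Fin n, x ≤ i.castSucc ∧ i.succ = y := by
  obtain ⟨i, rfl⟩ := Fin.exists_succ_eq.2 (Fin.ne_zero_of_lt h)
  exact ⟨i, Fin.le_castSucc_iff.2 h, rfl⟩

/-- The morphisms of `[n]` all of whose elementary steps belong to `S`. -/
def stepWeq (S : Set (Fin n)) : MorphismProperty (Fin (n + 1)) :=
  fun x y _ => ∀ i : Fin n, x ≤ i.castSucc → i.castSucc < y → i ∈ S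

/-- The morphisms of `[n]` which are identities or whose last elementary step
does not belong to `S`. -/
def stepCof (S : Set (Fin n)) : MorphismProperty (Fin (n + 1)) :=
  fun x y _ => ∀ i ∈ S, x ≤ i.castSucc → i.succ ≠ y

lemma exists_stepCof_stepWeq (S : Set (Fin n)) {x y : Fin (n + 1)} (f : x ⟶ y) :
    ∃ (z : Fin (n + 1)) (i : x ⟶ z) (p : z ⟶ y), stepCof S i ∧ stepWeq S p := by
  obtain ⟨z, ⟨hxz, hzy, hz⟩, hmin⟩ := wellFounded_lt.has_min
    {z : Fin (n + 1) | x ≤ z ∧ z ≤ y ∧ ∀ i : Fin n, z ≤ i.castSucc → i.castSucc < y → i ∈ S}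
    ⟨y, f.le, le_rfl, fun i h h' => absurd h h'.not_ge⟩
  refine ⟨z, homOfLE hxz, homOfLE hzy, ?_, hz⟩
  rintro i hi hxi rfl
  refine hmin i.castSucc ⟨hxi, i.castSucc_lt_succ.le.trans hzy, fun j hj hjy => ?_⟩
    i.castSucc_lt_succ
  obtain hij | hij := hj.eq_or_lt
  · rwa [← Fin.castSucc_injective _ hij]
  · exact hz j (Fin.castSucc_lt_iff_succ_le.1 hij) hjy

/-- The model structure on `[n]` in which every morphism is a fibration and the weak
equivalences are generated by the elementary steps in `S`. -/
def ofSteps (S : Set (Fin n)) : ModelStructure (Fin (n + 1)) where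
  weq := stepWeq S
  fib := ⊤
  cof := stepCof S
  weq_comp := ⟨fun {_ y _} _ _ hf hg i hxi hiz =>
    (lt_or_ge i.castSucc y).elim (hf i hxi) fun h => hg i h hiz⟩
  fib_comp := inferInstance
  cof_comp := ⟨fun {_ y z} _ g hf hg i hi hxi hiz => by
    obtain h | h := le_or_gt y i.castSucc
    · exact hg i hi h hiz
    · exact hf i hi hxi
        ((Fin.castSucc_lt_iff_succ_le.1 h).antisymm (g.le.trans hiz.ge))⟩
  weq_retract := stableUnderRetractsHom _
  fib_retract := stableUnderRetractsHom _
  cof_retract := stableUnderRetractsHom _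
  weq_two_out_of_three :=
    { comp_mem := fun {_ y _} _ _ hf hg i hxi hiz =>
        (lt_or_ge i.castSucc y).elim (hf i hxi) fun h => hg i h hiz
      of_postcomp := fun _ g _ hfg i hxi hiy => hfg i hxi (hiy.trans_le g.le)
      of_precomp := fun f _ _ hfg i hyi hiz => hfg i (f.le.trans hyi) hiz }
  lift_cof_trivFib := fun A B X Y i p hi _ hp =>
    hasLiftingProperty_of_le i p fun hAX hBY => by
      by_contra! h
      obtain ⟨j, hj, rfl⟩ := exists_succ_of_lt h
      exact hi j (hp j hj (j.castSucc_lt_succ.trans_le hBY)) (hAX.trans hj) rfl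
  lift_trivCof_fib := fun A B X Y i p hi hi' _ =>
    hasLiftingProperty_of_le i p fun hAX _ => by
      refine le_trans ?_ hAX
      by_contra! h
      obtain ⟨j, hj, rfl⟩ := exists_succ_of_lt h
      exact hi j (hi' j hj j.castSucc_lt_succ) hj rfl
  factor_cof_trivFib := fun X Y f => by
    obtain ⟨z, i, p, hi, hp⟩ := exists_stepCof_stepWeq S f
    exact ⟨z, i, p, hi, trivial, hp, Subsingleton.elim _ _⟩
  factor_trivCof_fib := fun X Y f =>
    ⟨X, 𝟙 X, f, fun i _ h h' => (h'.trans_le h).not_gt i.castSucc_lt_succ,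
      fun i h h' => absurd h h'.not_ge, trivial, Category.id_comp f⟩

/-- The elementary steps of `[n]` which are weak equivalences. -/
def steps (M : ModelStructure (Fin (n + 1))) : Set (Fin n) :=
  {i | M.weq (homOfLE i.castSucc_lt_succ.le)}

lemma steps_ofSteps (S : Set (Fin n)) : (ofSteps S).steps = S := by
  ext i
  refine ⟨fun h => h i le_rfl i.castSucc_lt_succ, fun hi j hij hji => ?_⟩
  rwa [← Fin.castSucc_injective _ (hij.antisymm (Fin.le_castSucc_iff.2 hji))]

lemma weq_eq_stepWeq {M : ModelStructure (Fin (n + 1))}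
    (hM : ∀ ⦃x y : Fin (n + 1)⦄ (f : x ⟶ y), M.fib f) : M.weq = stepWeq M.steps := by
  have := M.weq_two_out_of_three
  ext x y f
  constructor
  · intro hf i hxi hiy
    have hs : M.weq (homOfLE hxi ≫ homOfLE i.castSucc_lt_succ.le) :=
      M.weq_left hM _ (homOfLE (Fin.castSucc_lt_iff_succ_le.1 hiy))
        (by rwa [Subsingleton.elim (_ ≫ _) f])
    exact M.weq.of_precomp _ _ (M.weq_left hM _ _ hs) hs
  · induction y using Fin.induction with
    | zero =>
      intro _
      obtain rfl := le_antisymm f.le (Fin.zero_le x)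
      rw [Subsingleton.elim f (𝟙 _)]
      exact M.weq_id _
    | succ i ih =>
      intro hf
      obtain rfl | h := f.le.eq_or_lt
      · rw [Subsingleton.elim f (𝟙 _)]
        exact M.weq_id _
      · have hxi : x ≤ i.castSucc := Fin.le_castSucc_iff.2 h
        rw [Subsingleton.elim f (homOfLE hxi ≫ homOfLE i.castSucc_lt_succ.le)]
        exact M.weq.comp_mem _ _
          (ih _ fun j hxj hj => hf j hxj (hj.trans i.castSucc_lt_succ))
          (hf i hxi i.castSucc_lt_succ)

lemma cof_eq_stepCof {M : ModelStructure (Fin (n + 1))}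
    (hM : ∀ ⦃x y : Fin (n + 1)⦄ (f : x ⟶ y), M.fib f) : M.cof = stepCof M.steps := by
  ext x y f
  constructor
  · rintro hf i hi hxi rfl
    exact (le_of_hasLiftingProperty f _ (M.lift_cof_trivFib _ _ hf (hM _) hi) hxi
      le_rfl).not_gt i.castSucc_lt_succ
  · intro hf
    obtain ⟨c, i, p, hi, -, hp, -⟩ := M.factor_cof_trivFib f
    rw [weq_eq_stepWeq hM] at hp
    obtain rfl | h := p.le.eq_or_lt
    · rwa [Subsingleton.elim f i]
    · obtain ⟨j, hj, rfl⟩ := exists_succ_of_lt h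
      exact absurd rfl (hf j (hp j hj j.castSucc_lt_succ) (i.le.trans hj))

lemma ofSteps_steps {M : ModelStructure (Fin (n + 1))}
    (hM : ∀ ⦃x y : Fin (n + 1)⦄ (f : x ⟶ y), M.fib f) : ofSteps M.steps = M := by
  have hw := weq_eq_stepWeq hM
  have hc := cof_eq_stepCof hM
  have hf : M.fib = ⊤ := by
    ext x y f
    exact ⟨fun _ => trivial, fun _ => hM f⟩
  generalize M.steps = S at *
  cases M
  subst hw hc hf
  rfl

/-- Model structures on `[n]` in which every morphism is a fibration correspond to sets of
elementary steps. -/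
def allFibrationsEquiv (n : ℕ) :
    {M : ModelStructure (Fin (n + 1)) // ∀ ⦃x y : Fin (n + 1)⦄ (f : x ⟶ y), M.fib f} ≃
      Set (Fin n) where
  toFun M := M.1.steps
  invFun S := ⟨ofSteps S, fun _ _ _ => trivial⟩
  left_inv M := Subtype.ext (ofSteps_steps M.2)
  right_inv := steps_ofSteps

end ModelStructure

/-- The number of model structures on `[n]` in which every morphism is a
fibration is exactly `2^n`. -/
theorem card_model_structures_all_fibrations (n : ℕ) :
    Nat.card {M : ModelStructure (Fin (n + 1)) //
        ∀ ⦃x y : Fin (n + 1)⦄ (f : x ⟶ y), M.fib f} =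
      2 ^ n := by
  rw [Nat.card_congr (ModelStructure.allFibrationsEquiv n)]
  simp
end
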